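/- There exist constants C > 0, K₁ > 1 and ν₀ ∈ (0,1], depending only on f and D, such that for every K ≥ K₁ and every ν ∈ (0,ν₀], the Lebesgue measure of the set L_K of times t ∈ [T₁,T₂] satisfying (i) K⁻¹ ≤ |u(t)|_{L∞} and max_x u_x(t,x) ≤ K, (ii) K⁻¹ν⁻¹ ≤ |u_x(t)|_{L∞} ≤ Kν⁻¹, and (iii) |u_xx(t)|_{L∞} ≤ Kν⁻², satisfies λ(L_K) ≥ C. -/

import Mathlib

open MeasureTheory Set
open scoped ENNReal

/-- The `L^p` norm (on the circle, i.e. over one period `(0,1]`) of the `m`-th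
derivative of a function `v : ℝ → ℝ` (identified with a function on `S¹ = ℝ/ℤ`). -/
noncomputable def sobLp (m : ℕ) (p : ℝ≥0∞) (v : ℝ → ℝ) : ℝ :=
  (eLpNorm (iteratedDeriv m v) p (volume.restrict (Ioc (0:ℝ) 1))).toReal

/-- `u` is a smooth, space-periodic, zero-mean-value solution of the generalised
Burgers equation `u_t + f'(u) u_x - ν u_xx = 0` with strongly convex `f` and
nonzero initial condition. -/
structure IsBurgersSolution (f : ℝ → ℝ) (σ ν : ℝ) (u : ℝ → ℝ → ℝ) : Prop where
  hf : ContDiff ℝ (⊤ : ℕ∞) f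
  hσ : 0 < σ
  hconv : ∀ y, σ ≤ iteratedDeriv 2 f y
  hν : 0 < ν
  hu : ContDiffOn ℝ (⊤ : ℕ∞) (Function.uncurry u) (Ici (0:ℝ) ×ˢ univ)
  hper : ∀ t x, u t (x + 1) = u t x
  hpde : ∀ t, 0 < t → ∀ x,
    deriv (fun s => u s x) t + deriv f (u t x) * deriv (u t) x
      - ν * deriv (deriv (u t)) x = 0
  hmean : ∀ t, 0 ≤ t → ∫ x in Ioc (0:ℝ) 1, u t x = 0
  hinit : ∃ x, u 0 x ≠ 0

/-- The quantity `D = max(|u₀|₁⁻¹, |u₀|_{1,∞})`. -/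
noncomputable def burgersD (u : ℝ → ℝ → ℝ) : ℝ :=
  max (sobLp 0 1 (u 0))⁻¹ (sobLp 1 ⊤ (u 0))

/-- `T₁ = D⁻² C̃⁻¹ / 4`. -/
noncomputable def burgersT₁ (D Ct : ℝ) : ℝ := (D ^ 2)⁻¹ * Ct⁻¹ / 4

/-- `T₂ = max(3T₁/2, 2Dσ⁻¹)`. -/
noncomputable def burgersT₂ (σ D Ct : ℝ) : ℝ :=
  max (3 / 2 * burgersT₁ D Ct) (2 * D * σ⁻¹)

/-- Time average over `[T₁, T₂]`. -/
noncomputable def timeAvg (T₁ T₂ : ℝ) (A : ℝ → ℝ) : ℝ :=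
  (T₂ - T₁)⁻¹ * ∫ t in T₁..T₂, A t

/-- The structure function `S_p(ℓ)`. -/
noncomputable def structFun (T₁ T₂ : ℝ) (u : ℝ → ℝ → ℝ) (p ℓ : ℝ) : ℝ :=
  timeAvg T₁ T₂ (fun t => ∫ x in Ioc (0:ℝ) 1, |u t (x + ℓ) - u t x| ^ p)

def BSm (w : ℝ → ℝ → ℝ) : Prop :=
  ContDiffOn ℝ (⊤ : ℕ∞) (Function.uncurry w) (Ici (0:ℝ) ×ˢ univ)

lemma BSm.slice {w : ℝ → ℝ → ℝ} (h : BSm w) {t : ℝ} (ht : 0 ≤ t) :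
    ContDiff ℝ (⊤ : ℕ∞) (w t) := by
  have h1 : ContDiff ℝ (⊤ : ℕ∞) (fun x : ℝ => (t, x)) := by fun_prop
  have := ContDiffOn.comp (s := univ) h h1.contDiffOn (by intro x _; simp [ht])
  exact contDiffOn_univ.1 this

lemma BSm.cont {w : ℝ → ℝ → ℝ} (h : BSm w) :
    ContinuousOn (Function.uncurry w) (Ici (0:ℝ) ×ˢ univ) := ContDiffOn.continuousOn h

lemma BSm.at {w : ℝ → ℝ → ℝ} (h : BSm w) {t : ℝ} (ht : 0 < t) (x : ℝ) :
    ContDiffAt ℝ (⊤ : ℕ∞) (Function.uncurry w) (t, x) :=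
  ContDiffOn.contDiffAt h (prod_mem_nhds (Ici_mem_nhds ht) Filter.univ_mem)

lemma BSm.dx {w : ℝ → ℝ → ℝ} (h : BSm w) : BSm (fun t x => deriv (w t) x) := by
  have hud : UniqueDiffOn ℝ (Ici (0:ℝ) ×ˢ (univ : Set ℝ)) :=
    (uniqueDiffOn_Ici 0).prod uniqueDiffOn_univ
  have h1 : ContDiffOn ℝ (⊤ : ℕ∞) (fderivWithin ℝ (Function.uncurry w) (Ici (0:ℝ) ×ˢ univ))
      (Ici (0:ℝ) ×ˢ univ) := ContDiffOn.fderivWithin h hud (by simp)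
  have h2 := h1.clm_apply (contDiffOn_const (c := ((0:ℝ), (1:ℝ))))
  refine ContDiffOn.congr h2 ?_
  rintro ⟨t, x⟩ ⟨ht, -⟩
  have hd : HasFDerivWithinAt (Function.uncurry w) _ (Ici (0:ℝ) ×ˢ univ) (t, x) :=
    ((ContDiffOn.differentiableOn h (by simp)) (t, x) ⟨ht, mem_univ _⟩).hasFDerivWithinAt
  have h3 : HasDerivAt (fun y : ℝ => (t, y)) ((0:ℝ), (1:ℝ)) x :=
    (hasDerivAt_const x t).prodMk (hasDerivAt_id x)
  have h4 := hd.comp_hasDerivWithinAt (s := univ) x h3.hasDerivWithinAt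
    (by intro y _; exact ⟨ht, mem_univ _⟩)
  rw [hasDerivWithinAt_univ] at h4
  exact h4.deriv

lemma BSm.hasDt {w : ℝ → ℝ → ℝ} (h : BSm w) {t : ℝ} (ht : 0 < t) (x : ℝ) :
    HasDerivAt (fun s => w s x) (deriv (fun s => w s x) t) t := by
  have h1 : DifferentiableAt ℝ (Function.uncurry w) (t, x) := (h.at ht x).differentiableAt (by simp)
  have h2 : DifferentiableAt ℝ (fun s : ℝ => (s, x)) t := by fun_prop
  exact (DifferentiableAt.comp (f := fun s : ℝ => (s, x)) t h1 h2).hasDerivAt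

lemma BSm.hasDx {w : ℝ → ℝ → ℝ} (h : BSm w) {t : ℝ} (ht : 0 ≤ t) (x : ℝ) :
    HasDerivAt (w t) (deriv (w t) x) x :=
  ((h.slice ht).differentiable (by simp) x).hasDerivAt

lemma BSm.dt_eq {w : ℝ → ℝ → ℝ} (h : BSm w) {t : ℝ} (ht : 0 < t) (x : ℝ) :
    deriv (fun s => w s x) t = fderiv ℝ (Function.uncurry w) (t, x) (1, 0) := by
  have h1 : DifferentiableAt ℝ (Function.uncurry w) (t, x) := (h.at ht x).differentiableAt (by simp)
  have h3 : HasDerivAt (fun y : ℝ => (y, x)) ((1:ℝ), (0:ℝ)) t :=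
    (hasDerivAt_id t).prodMk (hasDerivAt_const t x)
  exact (h1.hasFDerivAt.comp_hasDerivAt t h3).deriv

lemma BSm.dx_eq {w : ℝ → ℝ → ℝ} (h : BSm w) {t : ℝ} (ht : 0 < t) (x : ℝ) :
    deriv (w t) x = fderiv ℝ (Function.uncurry w) (t, x) (0, 1) := by
  have h1 : DifferentiableAt ℝ (Function.uncurry w) (t, x) := (h.at ht x).differentiableAt (by simp)
  have h3 : HasDerivAt (fun y : ℝ => (t, y)) ((0:ℝ), (1:ℝ)) x :=
    (hasDerivAt_const x t).prodMk (hasDerivAt_id x)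
  exact (h1.hasFDerivAt.comp_hasDerivAt x h3).deriv

lemma BSm.comm {w : ℝ → ℝ → ℝ} (h : BSm w) {t : ℝ} (ht : 0 < t) (x : ℝ) :
    HasDerivAt (fun y => deriv (fun s => w s y) t) (deriv (fun s => deriv (w s) x) t) x := by
  have hF : ContDiffAt ℝ (⊤ : ℕ∞) (fderiv ℝ (Function.uncurry w)) (t, x) :=
    (h.at ht x).fderiv_right (by simp)
  have hF1 := (hF.differentiableAt (by simp)).hasFDerivAt
  have hsym := (h.at ht x).isSymmSndFDerivAt (by simpa using WithTop.coe_le_coe.2 (le_top (a := (2 : ℕ∞))))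
  have h3 : HasDerivAt (fun y : ℝ => (t, y)) ((0:ℝ), (1:ℝ)) x :=
    (hasDerivAt_const x t).prodMk (hasDerivAt_id x)
  have h3' : HasDerivAt (fun y : ℝ => (y, x)) ((1:ℝ), (0:ℝ)) t :=
    (hasDerivAt_id t).prodMk (hasDerivAt_const t x)
  have a1 : HasDerivAt (fun y => fderiv ℝ (Function.uncurry w) (t, y) (1, 0))
      (fderiv ℝ (fderiv ℝ (Function.uncurry w)) (t, x) (0, 1) (1, 0)) x := by
    have b := (ContinuousLinearMap.apply ℝ ℝ ((1:ℝ), (0:ℝ))).hasFDerivAt.comp_hasDerivAt x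
      (hF1.comp_hasDerivAt x h3)
    exact b
  have a2 : HasDerivAt (fun s => fderiv ℝ (Function.uncurry w) (s, x) (0, 1))
      (fderiv ℝ (fderiv ℝ (Function.uncurry w)) (t, x) (1, 0) (0, 1)) t := by
    have b := (ContinuousLinearMap.apply ℝ ℝ ((0:ℝ), (1:ℝ))).hasFDerivAt.comp_hasDerivAt t
      (hF1.comp_hasDerivAt t h3')
    exact b
  have e1 : (fun y => deriv (fun s => w s y) t)
      = fun y => fderiv ℝ (Function.uncurry w) (t, y) (1, 0) := by
    funext y; exact h.dt_eq ht y
  have e2 : (fun s => deriv (w s) x)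
      =ᶠ[nhds t] fun s => fderiv ℝ (Function.uncurry w) (s, x) (0, 1) := by
    filter_upwards [Ioi_mem_nhds ht] with s hs
    exact h.dx_eq hs x
  have e3 := (a2.congr_of_eventuallyEq e2).deriv
  rw [e1, e3, hsym (1, 0) (0, 1)]
  exact a1

/-- second derivative test, necessary condition -/
lemma second_deriv_nonpos {g g' : ℝ → ℝ} {c x : ℝ} (hg : ∀ y, HasDerivAt g (g' y) y)
    (hg' : HasDerivAt g' c x) (hm : ∀ y, g y ≤ g x) : g' x = 0 ∧ c ≤ 0 := by
  have hlm : IsLocalMax g x := Filter.Eventually.of_forall hm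
  have h0 : g' x = 0 := hlm.hasDerivAt_eq_zero (hg x)
  refine ⟨h0, ?_⟩
  by_contra hc
  push Not at hc
  have hd : deriv g = g' := funext fun y => (hg y).deriv
  have hmin : IsLocalMin g x := by
    apply isLocalMin_of_deriv_deriv_pos
    · rw [hd, hg'.deriv]; exact hc
    · rw [hd, h0]
    · exact (hg x).continuousAt
  have hev : g =ᶠ[nhds x] fun _ => g x := by
    filter_upwards [hmin] with y hy
    exact le_antisymm (hm y) hy
  have h2 := hev.deriv.deriv_eq
  rw [hd, hg'.deriv] at h2
  simp at h2
  linarith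

lemma periodic_max_principle {Z Zt Zx Zxx : ℝ → ℝ → ℝ} {a b M : ℝ}
    (hc : ContinuousOn (Function.uncurry Z) (Icc a b ×ˢ univ))
    (hper : ∀ t x, Z t (x + 1) = Z t x)
    (ht : ∀ t ∈ Ioc a b, ∀ x, HasDerivAt (fun s => Z s x) (Zt t x) t)
    (hx : ∀ t ∈ Ioc a b, ∀ x, HasDerivAt (Z t) (Zx t x) x)
    (hxx : ∀ t ∈ Ioc a b, ∀ x, HasDerivAt (Zx t) (Zxx t x) x)
    (h0 : ∀ x, Z a x ≤ M)
    (hmax : ∀ t ∈ Ioc a b, ∀ x, M < Z t x → Zx t x = 0 → Zxx t x ≤ 0 → Zt t x ≤ 0) :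
    ∀ t ∈ Icc a b, ∀ x, Z t x ≤ M := by
  intro t1 ht1 x1
  have hab : a ≤ b := ht1.1.trans ht1.2
  suffices H : ∀ ε > 0, Z t1 x1 ≤ M + ε * (t1 - a) by
    have hlim : Filter.Tendsto (fun ε : ℝ => M + ε * (t1 - a)) (nhdsWithin 0 (Ioi 0)) (nhds M) := by
      have : Filter.Tendsto (fun ε : ℝ => M + ε * (t1 - a)) (nhds 0) (nhds (M + 0 * (t1 - a))) :=
        Continuous.tendsto (by fun_prop) 0
      simp only [zero_mul, add_zero] at this
      exact this.mono_left nhdsWithin_le_nhds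
    refine ge_of_tendsto hlim ?_
    filter_upwards [self_mem_nhdsWithin] with ε hε using H ε hε
  intro ε hε
  have hper' : ∀ t, Function.Periodic (Z t) 1 := fun t x => hper t x
  obtain ⟨⟨ts, xs⟩, hmem, hbest⟩ := (isCompact_Icc.prod (isCompact_Icc (a := (0:ℝ)) (b := 1))).exists_isMaxOn
    (s := Icc a b ×ˢ Icc (0:ℝ) 1) ⟨(a, 0), by simp [hab]⟩
    (f := fun q : ℝ × ℝ => Z q.1 q.2 - ε * (q.1 - a))
    (by
      refine ContinuousOn.sub (hc.mono ?_) (by fun_prop)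
      exact prod_mono le_rfl (subset_univ _))
  have hbest' : ∀ t ∈ Icc a b, ∀ x, Z t x - ε * (t - a) ≤ Z ts xs - ε * (ts - a) := by
    intro t ht x
    obtain ⟨y, hy, hyx⟩ := (hper' t).exists_mem_Ico₀ one_pos x
    rw [hyx]
    exact hbest (show (t, y) ∈ Icc a b ×ˢ Icc (0:ℝ) 1 from ⟨ht, hy.1, hy.2.le⟩)
  by_contra hcon
  push Not at hcon
  have hb1 := hbest' t1 ht1 x1
  have hts : ts ∈ Icc a b := hmem.1
  have hpos : M < Z ts xs - ε * (ts - a) := by linarith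
  have hne : a < ts := by
    rcases eq_or_lt_of_le hts.1 with h | h
    · subst h; have := h0 xs; simp at hpos; linarith
    · exact h
  have htm : ts ∈ Ioc a b := ⟨hne, hts.2⟩
  obtain ⟨hx0, hxx0⟩ := second_deriv_nonpos (hx ts htm) (hxx ts htm xs)
    (fun y => by have := hbest' ts hts y; linarith)
  have hZt := hmax ts htm xs (by nlinarith [mul_nonneg hε.le (sub_nonneg.2 hts.1)]) hx0 hxx0
  -- left derivative
  have hd : HasDerivAt (fun s => Z s xs - ε * (s - a)) (Zt ts xs - ε) ts := by
    have := ((hasDerivAt_id ts).sub_const a).const_mul ε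
    simpa using (ht ts htm xs).fun_sub this
  have hlt : Zt ts xs - ε < 0 := by linarith
  have hslope := hasDerivAt_iff_tendsto_slope.1 hd
  have hev : ∀ᶠ s in nhdsWithin ts (Iio ts), slope (fun s => Z s xs - ε * (s - a)) ts s < 0 :=
    (hslope.mono_left (nhdsWithin_mono _ (fun s hs => ne_of_lt hs))).eventually (gt_mem_nhds hlt)
  have hev2 : ∀ᶠ s in nhdsWithin ts (Iio ts), s ∈ Ioo a ts := Ioo_mem_nhdsLT hne
  obtain ⟨s, hs1, hs2⟩ := (hev.and hev2).exists
  rw [slope_def_field, div_neg_iff] at hs1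
  have hb := hbest' s ⟨hs2.1.le, hs2.2.le.trans hts.2⟩ xs
  have := hs2.2
  rcases hs1 with h | h <;> linarith [h.1, h.2]

lemma IsBurgersSolution.smu {f : ℝ → ℝ} {σ ν : ℝ} {u : ℝ → ℝ → ℝ} (h : IsBurgersSolution f σ ν u) :
    BSm u := h.hu

lemma smooth_hasDeriv {g : ℝ → ℝ} (hg : ContDiff ℝ (⊤ : ℕ∞) g) :
    ContDiff ℝ (⊤ : ℕ∞) (deriv g) ∧ ∀ y, HasDerivAt g (deriv g y) y := by
  refine ⟨?_, fun y => (hg.differentiable (by simp) y).hasDerivAt⟩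
  have := hg.iterate_deriv 1
  simpa using this

lemma bt_u {f : ℝ → ℝ} {σ ν : ℝ} {u : ℝ → ℝ → ℝ} (h : IsBurgersSolution f σ ν u)
    {t : ℝ} (ht : 0 < t) (x : ℝ) :
    deriv (fun s => u s x) t = ν * deriv (deriv (u t)) x - deriv f (u t x) * deriv (u t) x := by
  have := h.hpde t ht x
  linarith

lemma bt_v {f : ℝ → ℝ} {σ ν : ℝ} {u : ℝ → ℝ → ℝ} (h : IsBurgersSolution f σ ν u)
    {t : ℝ} (ht : 0 < t) (x : ℝ) :
    deriv (fun s => deriv (u s) x) t = ν * deriv (deriv (deriv (u t))) x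
      - deriv (deriv f) (u t x) * deriv (u t) x ^ 2 - deriv f (u t x) * deriv (deriv (u t)) x := by
  have h1 := h.smu.comm ht x
  rw [funext (bt_u h ht)] at h1
  obtain ⟨f1s, -⟩ := smooth_hasDeriv h.hf
  obtain ⟨f2s, hf2⟩ := smooth_hasDeriv f1s
  have hu := h.smu.hasDx ht.le x
  have hv := h.smu.dx.hasDx ht.le x
  have hp := h.smu.dx.dx.hasDx ht.le x
  have h2 := (hp.const_mul ν).fun_sub (((hf2 (u t x)).comp x hu).fun_mul hv)
  rw [h1.unique h2]
  simp only [Function.comp]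
  ring

lemma bt_p {f : ℝ → ℝ} {σ ν : ℝ} {u : ℝ → ℝ → ℝ} (h : IsBurgersSolution f σ ν u)
    {t : ℝ} (ht : 0 < t) (x : ℝ) :
    deriv (fun s => deriv (deriv (u s)) x) t = ν * deriv (deriv (deriv (deriv (u t)))) x
      - deriv (deriv (deriv f)) (u t x) * deriv (u t) x ^ 3
      - 3 * deriv (deriv f) (u t x) * deriv (u t) x * deriv (deriv (u t)) x
      - deriv f (u t x) * deriv (deriv (deriv (u t))) x := by
  have h1 := h.smu.dx.comm ht x
  rw [funext (bt_v h ht)] at h1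
  obtain ⟨f1s, -⟩ := smooth_hasDeriv h.hf
  obtain ⟨f2s, hf2⟩ := smooth_hasDeriv f1s
  obtain ⟨f3s, hf3⟩ := smooth_hasDeriv f2s
  have hu := h.smu.hasDx ht.le x
  have hv := h.smu.dx.hasDx ht.le x
  have hp := h.smu.dx.dx.hasDx ht.le x
  have hq := h.smu.dx.dx.dx.hasDx ht.le x
  have h2 := ((hq.const_mul ν).fun_sub (((hf3 (u t x)).comp x hu).fun_mul (hv.fun_pow 2))).fun_sub
    (((hf2 (u t x)).comp x hu).fun_mul hp)
  have h3 := h1.unique h2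
  rw [h3]
  simp only [Function.comp]
  push_cast
  ring

lemma per_deriv {g : ℝ → ℝ} (hg : ∀ x, g (x + 1) = g x) (x : ℝ) :
    deriv g (x + 1) = deriv g x := by
  rw [← deriv_comp_add_const]
  congr 1
  funext y
  exact hg y

lemma conv_f {f : ℝ → ℝ} {σ ν : ℝ} {u : ℝ → ℝ → ℝ} (h : IsBurgersSolution f σ ν u) (y : ℝ) :
    σ ≤ deriv (deriv f) y := by
  have := h.hconv y
  rwa [iteratedDeriv_succ, iteratedDeriv_one] at this

/-- `u_x ≤ D`. -/
lemma ux_le {f : ℝ → ℝ} {σ ν : ℝ} {u : ℝ → ℝ → ℝ} (h : IsBurgersSolution f σ ν u) {D : ℝ}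
    (h0 : ∀ x, deriv (u 0) x ≤ D) {t : ℝ} (ht : 0 ≤ t) (x : ℝ) : deriv (u t) x ≤ D := by
  refine periodic_max_principle (Z := fun t x => deriv (u t) x)
    (Zt := fun t x => deriv (fun s => deriv (u s) x) t)
    (Zx := fun t x => deriv (deriv (u t)) x) (Zxx := fun t x => deriv (deriv (deriv (u t))) x)
    (a := 0) (b := t) (M := D) (h.smu.dx.cont.mono (prod_mono Icc_subset_Ici_self le_rfl))
    (fun t x => per_deriv (h.hper t) x) (fun t ht x => h.smu.dx.hasDt ht.1 x)
    (fun t ht x => h.smu.dx.hasDx ht.1.le x) (fun t ht x => h.smu.dx.dx.hasDx ht.1.le x)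
    h0 ?_ t ⟨ht, le_rfl⟩ x
  intro t ht x _ hx hxx
  rw [bt_v h ht.1, hx]
  have h1 := mul_nonneg (h.hσ.le.trans (conv_f h (u t x))) (sq_nonneg (deriv (u t) x))
  have h2 := mul_nonpos_of_nonneg_of_nonpos h.hν.le hxx
  linarith

/-- `σ t u_x ≤ 1`. -/
lemma ux_decay {f : ℝ → ℝ} {σ ν : ℝ} {u : ℝ → ℝ → ℝ} (h : IsBurgersSolution f σ ν u)
    {t : ℝ} (ht : 0 ≤ t) (x : ℝ) : t * deriv (u t) x ≤ σ⁻¹ := by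
  have hσ := h.hσ
  refine periodic_max_principle (Z := fun t x => t * deriv (u t) x)
    (Zt := fun t x => deriv (u t) x + t * deriv (fun s => deriv (u s) x) t)
    (Zx := fun t x => t * deriv (deriv (u t)) x)
    (Zxx := fun t x => t * deriv (deriv (deriv (u t))) x)
    (a := 0) (b := t) (M := σ⁻¹) ?_
    (fun t x => by simp only [per_deriv (h.hper t) x]) ?_
    (fun t ht x => (h.smu.dx.hasDx ht.1.le x).const_mul t)
    (fun t ht x => (h.smu.dx.dx.hasDx ht.1.le x).const_mul t)
    (by intro x; simp; exact h.hσ.le) ?_ t ⟨ht, le_rfl⟩ x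
  · have := h.smu.dx.cont.mono (prod_mono (Icc_subset_Ici_self : Icc (0:ℝ) t ⊆ Ici 0) le_rfl)
    exact continuousOn_fst.mul this
  · intro t ht x
    simpa using (hasDerivAt_id t).fun_mul (h.smu.dx.hasDt ht.1 x)
  intro t ht x hM hx hxx
  have ht0 : 0 < t := ht.1
  rw [bt_v h ht.1]
  have hx' : deriv (deriv (u t)) x = 0 := by
    rcases mul_eq_zero.1 hx with h | h
    · linarith
    · exact h
  rw [hx']
  set v := deriv (u t) x
  have h1 := conv_f h (u t x)
  have h2 := mul_nonpos_of_nonneg_of_nonpos h.hν.le hxx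
  have h3 : 1 < σ * (t * v) := by
    have := mul_lt_mul_of_pos_left hM hσ
    rwa [mul_inv_cancel₀ hσ.ne'] at this
  have hv : 0 < v := by
    by_contra hv
    push Not at hv
    have := mul_nonpos_of_nonneg_of_nonpos (mul_pos hσ ht0).le hv
    nlinarith
  have h4 : σ * (t * v ^ 2) ≤ deriv (deriv f) (u t x) * (t * v ^ 2) :=
    mul_le_mul_of_nonneg_right h1 (by positivity)
  nlinarith

/-- lower bound for `u_x`: `-u_x + M u²` obeys the maximum principle. -/
lemma ux_lower {f : ℝ → ℝ} {σ ν : ℝ} {u : ℝ → ℝ → ℝ} (h : IsBurgersSolution f σ ν u) {D M B2 : ℝ}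
    (h0 : ∀ x, |deriv (u 0) x| ≤ D) (hub : ∀ t, 0 ≤ t → ∀ x, |u t x| ≤ D)
    (hB2 : ∀ y, |y| ≤ D → |deriv (deriv f) y| ≤ B2) (hM0 : 0 ≤ M) (hM : B2 ≤ 2 * M * ν)
    {t : ℝ} (ht : 0 ≤ t) (x : ℝ) : - deriv (u t) x ≤ D + M * D ^ 2 := by
  have key : - deriv (u t) x + M * u t x ^ 2 ≤ D + M * D ^ 2 := by
    refine periodic_max_principle (Z := fun t x => - deriv (u t) x + M * u t x ^ 2)
      (Zt := fun t x => - deriv (fun s => deriv (u s) x) t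
        + M * (2 * u t x * deriv (fun s => u s x) t))
      (Zx := fun t x => - deriv (deriv (u t)) x + M * (2 * u t x * deriv (u t) x))
      (Zxx := fun t x => - deriv (deriv (deriv (u t))) x
        + M * (2 * deriv (u t) x * deriv (u t) x + 2 * u t x * deriv (deriv (u t)) x))
      (a := 0) (b := t) ?_ (fun t x => by simp only [per_deriv (h.hper t) x, h.hper]) ?_ ?_ ?_
      ?_ ?_ t ⟨ht, le_rfl⟩ x
    · have h1 := h.smu.dx.cont.mono (prod_mono (Icc_subset_Ici_self : Icc (0:ℝ) t ⊆ Ici 0) le_rfl)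
      have h2 := h.smu.cont.mono (prod_mono (Icc_subset_Ici_self : Icc (0:ℝ) t ⊆ Ici 0) le_rfl)
      exact h1.neg.add ((h2.pow 2).const_mul M)
    · intro t ht x
      simpa using (h.smu.dx.hasDt ht.1 x).fun_neg.fun_add
        (((h.smu.hasDt ht.1 x).fun_pow 2).const_mul M)
    · intro t ht x
      simpa using (h.smu.dx.hasDx ht.1.le x).fun_neg.fun_add
        (((h.smu.hasDx ht.1.le x).fun_pow 2).const_mul M)
    · intro t ht x
      exact (h.smu.dx.dx.hasDx ht.1.le x).fun_neg.fun_add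
        ((((h.smu.hasDx ht.1.le x).const_mul 2).fun_mul (h.smu.dx.hasDx ht.1.le x)).const_mul M)
    · intro x
      have a1 := neg_le_of_abs_le (h0 x)
      have a2 : u 0 x ^ 2 ≤ D ^ 2 := sq_le_sq' (neg_le_of_abs_le (hub 0 le_rfl x))
        (le_of_abs_le (hub 0 le_rfl x))
      have := mul_le_mul_of_nonneg_left a2 hM0
      linarith
    · intro t ht x _ hx hxx
      rw [bt_v h ht.1, bt_u h ht.1]
      have b1 := le_of_abs_le (hB2 _ (hub t ht.1.le x))
      have b2 := mul_nonpos_of_nonneg_of_nonpos h.hν.le hxx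
      have b3 : 0 ≤ (2 * M * ν - deriv (deriv f) (u t x)) * deriv (u t) x ^ 2 :=
        mul_nonneg (by linarith) (sq_nonneg _)
      have b4 : deriv f (u t x) * (- deriv (deriv (u t)) x + M * (2 * u t x * deriv (u t) x)) = 0 := by
        rw [hx, mul_zero]
      linarith
  have := mul_nonneg hM0 (sq_nonneg (u t x))
  linarith

lemma uxx_alg {ν τ V B2 B3 f2 f3 v p : ℝ} (hν : 0 < ν) (hτ0 : 0 ≤ τ) (hτ : τ ≤ ν)
    (hV : |v| ≤ V / ν) (h2 : |f2| ≤ B2) (h3 : |f3| ≤ B3) :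
    p ^ 2 - 6 * τ * f2 * v * p ^ 2 - 2 * τ * f3 * v ^ 3 * p
      - 2 * ((1 + 3 * B2 * V) / ν) * ν * p ^ 2 - 2 * ((1 + 3 * B2 * V) / ν) * f2 * v ^ 3
      ≤ (B3 ^ 2 * V ^ 6 + 2 * (1 + 3 * B2 * V) * B2 * V ^ 3) / ν ^ 4 := by
  have hB2 : 0 ≤ B2 := (abs_nonneg _).trans h2
  have hB3 : 0 ≤ B3 := (abs_nonneg _).trans h3
  have hVn : 0 ≤ V / ν := (abs_nonneg _).trans hV
  have hV0 : 0 ≤ V := by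
    have := mul_nonneg hVn hν.le
    rwa [div_mul_cancel₀ _ hν.ne'] at this
  have hν0 := hν.ne'
  have e1 : -(6 * τ * f2 * v * p ^ 2) ≤ 6 * B2 * V * p ^ 2 := by
    calc -(6 * τ * f2 * v * p ^ 2) ≤ |6 * τ * f2 * v * p ^ 2| := neg_le_abs _
      _ = 6 * τ * |f2| * |v| * p ^ 2 := by simp [abs_mul, abs_of_nonneg hτ0]
      _ ≤ 6 * ν * B2 * (V / ν) * p ^ 2 := by gcongr
      _ = 6 * B2 * V * p ^ 2 := by field_simp
  have e2 : -(2 * τ * f3 * v ^ 3 * p) ≤ p ^ 2 + B3 ^ 2 * V ^ 6 / ν ^ 4 := by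
    calc -(2 * τ * f3 * v ^ 3 * p) ≤ |2 * τ * f3 * v ^ 3 * p| := neg_le_abs _
      _ = 2 * τ * |f3| * |v| ^ 3 * |p| := by simp [abs_mul, abs_of_nonneg hτ0]
      _ ≤ 2 * ν * B3 * (V / ν) ^ 3 * |p| := by gcongr
      _ = 2 * (B3 * V ^ 3 / ν ^ 2) * |p| := by field_simp
      _ ≤ |p| ^ 2 + (B3 * V ^ 3 / ν ^ 2) ^ 2 := by
        nlinarith [sq_nonneg (|p| - B3 * V ^ 3 / ν ^ 2)]
      _ = p ^ 2 + B3 ^ 2 * V ^ 6 / ν ^ 4 := by rw [sq_abs]; congr 1; ring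
  have e3 : -(2 * ((1 + 3 * B2 * V) / ν) * f2 * v ^ 3)
      ≤ 2 * (1 + 3 * B2 * V) * B2 * V ^ 3 / ν ^ 4 := by
    have ha : 0 ≤ (1 + 3 * B2 * V) / ν := by positivity
    calc _ ≤ |2 * ((1 + 3 * B2 * V) / ν) * f2 * v ^ 3| := neg_le_abs _
      _ = 2 * ((1 + 3 * B2 * V) / ν) * |f2| * |v| ^ 3 := by
        rw [abs_mul, abs_mul, abs_mul, abs_of_nonneg ha, abs_pow]; norm_num
      _ ≤ 2 * ((1 + 3 * B2 * V) / ν) * B2 * (V / ν) ^ 3 := by gcongr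
      _ = _ := by field_simp
  have e4 : 2 * ((1 + 3 * B2 * V) / ν) * ν * p ^ 2 = (2 + 6 * B2 * V) * p ^ 2 := by
    field_simp; ring
  rw [e4, add_div (B3 ^ 2 * V ^ 6)]
  linarith

/-- upper bound for `u_xx` after time `ν`. -/
lemma uxx_le {f : ℝ → ℝ} {σ ν : ℝ} {u : ℝ → ℝ → ℝ} (h : IsBurgersSolution f σ ν u)
    {D V B2 B3 : ℝ} (hub : ∀ t, 0 ≤ t → ∀ x, |u t x| ≤ D)
    (hB2 : ∀ y, |y| ≤ D → |deriv (deriv f) y| ≤ B2)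
    (hB3 : ∀ y, |y| ≤ D → |deriv (deriv (deriv f)) y| ≤ B3)
    (hV : ∀ t, 0 ≤ t → ∀ x, |deriv (u t) x| ≤ V / ν)
    {t : ℝ} (ht : ν ≤ t) (x : ℝ) :
    deriv (deriv (u t)) x ^ 2 ≤ ((1 + 3 * B2 * V) * V ^ 2
      + (B3 ^ 2 * V ^ 6 + 2 * (1 + 3 * B2 * V) * B2 * V ^ 3)) / ν ^ 4 := by
  have hν := h.hν
  obtain ⟨a, ha⟩ : ∃ a, a = t - ν := ⟨_, rfl⟩
  have ha0 : 0 ≤ a := by linarith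
  obtain ⟨A, hA⟩ : ∃ A, A = (1 + 3 * B2 * V) / ν := ⟨_, rfl⟩
  obtain ⟨B, hB⟩ : ∃ B, B = (B3 ^ 2 * V ^ 6 + 2 * (1 + 3 * B2 * V) * B2 * V ^ 3) / ν ^ 4 := ⟨_, rfl⟩
  have hA0 : 0 ≤ A := by
    have b1 := (abs_nonneg _).trans (hB2 _ (hub t (by linarith) x))
    have b2 := (abs_nonneg _).trans (hV t (by linarith) x)
    have b3 : 0 ≤ V := by
      have := mul_nonneg b2 hν.le
      rwa [div_mul_cancel₀ _ hν.ne'] at this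
    rw [hA]; positivity
  have key : (t - a) * deriv (deriv (u t)) x ^ 2 + A * deriv (u t) x ^ 2 - B * (t - a)
      ≤ A * (V / ν) ^ 2 := by
    have hpos : ∀ s ∈ Ioc a t, 0 < s := fun s hs => lt_of_le_of_lt ha0 hs.1
    refine periodic_max_principle
      (Z := fun t x => (t - a) * deriv (deriv (u t)) x ^ 2 + A * deriv (u t) x ^ 2 - B * (t - a))
      (Zt := fun t x => (deriv (deriv (u t)) x ^ 2
          + (t - a) * (2 * deriv (deriv (u t)) x * deriv (fun s => deriv (deriv (u s)) x) t))
        + A * (2 * deriv (u t) x * deriv (fun s => deriv (u s) x) t) - B)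
      (Zx := fun t x => (t - a) * (2 * deriv (deriv (u t)) x * deriv (deriv (deriv (u t))) x)
        + A * (2 * deriv (u t) x * deriv (deriv (u t)) x))
      (Zxx := fun t x => (t - a) * (2 * deriv (deriv (deriv (u t))) x * deriv (deriv (deriv (u t))) x
          + 2 * deriv (deriv (u t)) x * deriv (deriv (deriv (deriv (u t)))) x)
        + A * (2 * deriv (deriv (u t)) x * deriv (deriv (u t)) x
          + 2 * deriv (u t) x * deriv (deriv (deriv (u t))) x))
      (a := a) (b := t) ?_
      (fun t x => by simp only [per_deriv (h.hper t) x, per_deriv (per_deriv (h.hper t)) x]) ?_ ?_ ?_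
      ?_ ?_ t ⟨by linarith, le_rfl⟩ x
    · have hsub : Icc a t ×ˢ (univ : Set ℝ) ⊆ Ici 0 ×ˢ univ :=
        prod_mono (fun s hs => ha0.trans hs.1) le_rfl
      have h1 := h.smu.dx.cont.mono hsub
      have h2 := h.smu.dx.dx.cont.mono hsub
      have h3 : ContinuousOn (fun q : ℝ × ℝ => q.1 - a) (Icc a t ×ˢ (univ : Set ℝ)) := by fun_prop
      exact ((h3.mul (h2.pow 2)).add ((h1.pow 2).const_mul A)).sub (h3.const_mul B)
    · intro s hs y
      have d0 : HasDerivAt (fun s : ℝ => s - a) 1 s := (hasDerivAt_id s).sub_const a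
      have := ((d0.fun_mul ((h.smu.dx.dx.hasDt (hpos s hs) y).fun_pow 2)).fun_add
        (((h.smu.dx.hasDt (hpos s hs) y).fun_pow 2).const_mul A)).fun_sub (d0.const_mul B)
      simpa using this
    · intro s hs y
      have := (((h.smu.dx.dx.hasDx (hpos s hs).le y).fun_pow 2).const_mul (s - a)).fun_add
        (((h.smu.dx.hasDx (hpos s hs).le y).fun_pow 2).const_mul A)
      simpa using this.sub_const (B * (s - a))
    · intro s hs y
      have d1 := h.smu.dx.hasDx (hpos s hs).le y
      have d2 := h.smu.dx.dx.hasDx (hpos s hs).le y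
      have d3 := h.smu.dx.dx.dx.hasDx (hpos s hs).le y
      exact (((d2.const_mul 2).fun_mul d3).const_mul (s - a)).fun_add
        (((d1.const_mul 2).fun_mul d2).const_mul A)
    · intro y
      have : deriv (u a) y ^ 2 ≤ (V / ν) ^ 2 := by
        rw [← sq_abs]; exact pow_le_pow_left₀ (abs_nonneg _) (hV a ha0 y) 2
      simpa using mul_le_mul_of_nonneg_left this hA0
    · intro s hs y _ hx hxx
      rw [bt_v h (hpos s hs), bt_p h (hpos s hs)]
      have b1 := uxx_alg (p := deriv (deriv (u s)) y) hν (sub_nonneg.2 hs.1.le)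
        (by have := hs.2; linarith : s - a ≤ ν) (hV s (hpos s hs).le y)
        (hB2 _ (hub s (hpos s hs).le y)) (hB3 _ (hub s (hpos s hs).le y))
      rw [← hA, ← hB] at b1
      have b2 := mul_nonpos_of_nonneg_of_nonpos hν.le hxx
      have b3 := congrArg (fun z => deriv f (u s y) * z) hx
      simp only [mul_zero] at b3
      have b4 : 0 ≤ 2 * ν * (s - a) * deriv (deriv (deriv (u s))) y ^ 2 :=
        mul_nonneg (mul_nonneg (by linarith) (sub_nonneg.2 hs.1.le)) (sq_nonneg _)
      linarith
  have hta : t - a = ν := by linarith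
  rw [hta] at key
  have h5 := mul_nonneg hA0 (sq_nonneg (deriv (u t) x))
  have h6 : ν * deriv (deriv (u t)) x ^ 2 ≤ A * (V / ν) ^ 2 + B * ν := by linarith
  have h7 : A * (V / ν) ^ 2 + B * ν = ν * (((1 + 3 * B2 * V) * V ^ 2
      + (B3 ^ 2 * V ^ 6 + 2 * (1 + 3 * B2 * V) * B2 * V ^ 3)) / ν ^ 4) := by
    rw [hA, hB]; field_simp
  rw [h7] at h6
  exact le_of_mul_le_mul_left h6 hν

lemma zero_mean_bound {g : ℝ → ℝ} (hg : Differentiable ℝ g) (hper : ∀ x, g (x + 1) = g x)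
    (hmean : ∫ x in Ioc (0:ℝ) 1, g x = 0) {M : ℝ} (hM0 : 0 ≤ M) (hM : ∀ x, deriv g x ≤ M) (x : ℝ) :
    |g x| ≤ M := by
  have hp : Function.Periodic g 1 := hper
  have hlip : ∀ y z, y ≤ z → z ≤ y + 1 → g z - g y ≤ M := by
    intro y z hyz hzy
    have := image_sub_le_mul_sub_of_deriv_le (f := g) (C := M) hg hM hyz
    nlinarith
  have h0 : ∫ y in (0:ℝ)..1, g y = 0 := by
    rw [intervalIntegral.integral_of_le zero_le_one]; exact hmean
  have hI : ∀ a, ∫ y in a..(a + 1), g y = 0 := by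
    intro a
    rw [hp.intervalIntegral_add_eq a 0]
    simpa using h0
  have hgc := hg.continuous
  rw [abs_le]
  constructor
  · have h1 : ∫ y in x..(x + 1), g y ≤ ∫ y in x..(x + 1), (g x + M) :=
      intervalIntegral.integral_mono_on (by linarith) (hgc.intervalIntegrable _ _) (by simp)
        (fun y hy => by have := hlip x y hy.1 hy.2; linarith)
    rw [hI] at h1
    simp at h1
    linarith
  · have h1 : ∫ y in (x - 1)..(x - 1 + 1), (g x - M) ≤ ∫ y in (x - 1)..(x - 1 + 1), g y :=
      intervalIntegral.integral_mono_on (by linarith) (by simp) (hgc.intervalIntegrable _ _)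
        (fun y hy => by have := hlip y x (by linarith [hy.2]) (by linarith [hy.1]); linarith)
    rw [hI] at h1
    simp at h1
    linarith

lemma linfty_ge {g : ℝ → ℝ} (hg : Continuous g) (hper : ∀ x, g (x + 1) = g x) (x : ℝ) :
    |g x| ≤ (eLpNorm g ⊤ (volume.restrict (Ioc (0:ℝ) 1))).toReal := by
  obtain ⟨B, hB⟩ := (isCompact_Icc (a := (0:ℝ)) (b := 1)).exists_bound_of_continuousOn hg.continuousOn
  have hfin : eLpNorm g ⊤ (volume.restrict (Ioc (0:ℝ) 1)) ≠ ⊤ := by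
    have : eLpNorm g ⊤ (volume.restrict (Ioc (0:ℝ) 1)) ≤ ENNReal.ofReal B := by
      rw [eLpNorm_exponent_top]
      refine eLpNormEssSup_le_of_ae_bound ?_
      filter_upwards [ae_restrict_mem measurableSet_Ioc] with y hy
      exact hB y ⟨hy.1.le, hy.2⟩
    exact (this.trans_lt ENNReal.ofReal_lt_top).ne
  set S := (eLpNorm g ⊤ (volume.restrict (Ioc (0:ℝ) 1))).toReal with hS
  have hae : ∀ᵐ y ∂(volume.restrict (Ioc (0:ℝ) 1)), |g y| ≤ S := by
    filter_upwards [ae_le_eLpNormEssSup (f := g) (μ := volume.restrict (Ioc (0:ℝ) 1))] with y hy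
    rw [← eLpNorm_exponent_top] at hy
    have := ENNReal.toReal_mono hfin hy
    rwa [toReal_enorm, Real.norm_eq_abs] at this
  have hEq : EqOn (fun y => min |g y| S) (fun y => |g y|) (Ioc (0:ℝ) 1) := by
    refine Measure.eqOn_of_ae_eq (μ := volume) ?_ (by fun_prop) (by fun_prop) ?_
    · filter_upwards [hae] with y hy
      exact min_eq_left hy
    · rw [interior_Ioc, closure_Ioo (by norm_num)]
      exact Ioc_subset_Icc_self
  have hp : Function.Periodic g 1 := hper
  obtain ⟨y, hy, hyx⟩ := hp.exists_mem_Ioc one_pos x 0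
  rw [hyx]
  have := hEq (show y ∈ Ioc (0:ℝ) 1 by simpa using hy)
  exact min_eq_left_iff.1 this

lemma linfty_le {g : ℝ → ℝ} {M : ℝ} (hM0 : 0 ≤ M) (hM : ∀ x, |g x| ≤ M) :
    (eLpNorm g ⊤ (volume.restrict (Ioc (0:ℝ) 1))).toReal ≤ M := by
  refine ENNReal.toReal_le_of_le_ofReal hM0 ?_
  rw [eLpNorm_exponent_top]
  exact eLpNormEssSup_le_of_ae_bound (Filter.Eventually.of_forall hM)

lemma l2_sq {g : ℝ → ℝ} (hg : Continuous g) :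
    (eLpNorm g 2 (volume.restrict (Ioc (0:ℝ) 1))).toReal ^ 2 = ∫ x in (0:ℝ)..1, g x ^ 2 := by
  have hm : MemLp g 2 (volume.restrict (Ioc (0:ℝ) 1)) := by
    obtain ⟨B, hB⟩ := (isCompact_Icc (a := (0:ℝ)) (b := 1)).exists_bound_of_continuousOn hg.continuousOn
    refine MemLp.of_bound hg.aestronglyMeasurable B ?_
    filter_upwards [ae_restrict_mem measurableSet_Ioc] with y hy
    exact hB y ⟨hy.1.le, hy.2⟩
  rw [hm.eLpNorm_eq_integral_rpow_norm (by norm_num) (by norm_num)]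
  have hnn : 0 ≤ ∫ x in Ioc (0:ℝ) 1, ‖g x‖ ^ (2:ℝ≥0∞).toReal := by positivity
  rw [ENNReal.toReal_ofReal (by positivity), intervalIntegral.integral_of_le zero_le_one]
  rw [← Real.rpow_natCast, ← Real.rpow_mul hnn]
  simp

lemma l1_eq {g : ℝ → ℝ} (hg : Continuous g) :
    (eLpNorm g 1 (volume.restrict (Ioc (0:ℝ) 1))).toReal = ∫ x in (0:ℝ)..1, |g x| := by
  rw [eLpNorm_one_eq_lintegral_enorm, intervalIntegral.integral_of_le zero_le_one,
    ← integral_norm_eq_lintegral_enorm hg.aestronglyMeasurable]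
  rfl

lemma chebyshev_time {g : ℝ → ℝ} (hg : Continuous g) {a b c A B : ℝ} (hab : a ≤ b) (hc : 0 ≤ c)
    (hB : 0 < B) (hgB : ∀ t ∈ Icc a b, g t ≤ B) (hA : A ≤ ∫ t in a..b, g t)
    (hcA : c * (b - a) ≤ A / 2) :
    ENNReal.ofReal (A / (2 * B)) ≤ volume {t | t ∈ Icc a b ∧ c ≤ g t} := by
  set s := {t | t ∈ Icc a b ∧ c ≤ g t} with hs
  have hsm : MeasurableSet s := (isClosed_Icc.inter (isClosed_le continuous_const hg)).measurableSet
  have hsub : s ⊆ Icc a b := fun t ht => ht.1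
  have hfin : volume s ≠ ⊤ := (measure_mono hsub).trans_lt (by simp) |>.ne
  refine ENNReal.ofReal_le_of_le_toReal ?_
  change _ ≤ volume.real s
  have h1 : ∫ t in a..b, g t = ∫ t in Icc a b, g t := by
    rw [intervalIntegral.integral_of_le hab, integral_Icc_eq_integral_Ioc]
  have hi1 : IntegrableOn (fun _ : ℝ => c) (Icc a b) := integrableOn_const (by simp)
  have hi2 : IntegrableOn (s.indicator (fun _ : ℝ => B)) (Icc a b) :=
    Integrable.indicator (integrableOn_const (by simp)) hsm
  have h2 : ∫ t in Icc a b, g t ≤ ∫ t in Icc a b, (c + s.indicator (fun _ => B) t) := by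
    refine setIntegral_mono_on (hg.continuousOn.integrableOn_Icc) (hi1.add hi2) measurableSet_Icc ?_
    intro t ht
    by_cases hts : t ∈ s
    · rw [indicator_of_mem hts]; linarith [hgB t ht]
    · rw [indicator_of_notMem hts]
      have : ¬ c ≤ g t := fun h => hts ⟨ht, h⟩
      linarith
  have h3 : ∫ t in Icc a b, (c + s.indicator (fun _ => B) t) = c * (b - a) + B * volume.real s := by
    rw [integral_add hi1 hi2, setIntegral_const, setIntegral_indicator hsm,
      inter_eq_self_of_subset_right hsub, setIntegral_const]
    simp [hab, mul_comm]
  rw [div_le_iff₀ (by positivity)]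
  linarith

lemma param_cont {w : ℝ → ℝ → ℝ} (hw : ContinuousOn (Function.uncurry w) (Ici (0:ℝ) ×ˢ univ)) :
    Continuous (fun t => ∫ x in (0:ℝ)..1, w (max t 0) x) := by
  refine intervalIntegral.continuous_parametric_intervalIntegral_of_continuous'
    (f := fun t x => w (max t 0) x) ?_ 0 1
  have : Continuous (fun q : ℝ × ℝ => (max q.1 0, q.2)) := by fun_prop
  have h2 := hw.comp_continuous this (fun q => by simp)
  exact h2

lemma energy_deriv {f : ℝ → ℝ} {σ ν : ℝ} {u : ℝ → ℝ → ℝ} (h : IsBurgersSolution f σ ν u)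
    {t : ℝ} (ht : 0 < t) :
    HasDerivAt (fun s => ∫ x in (0:ℝ)..1, u s x ^ 2)
      (- (2 * ν) * ∫ x in (0:ℝ)..1, deriv (u t) x ^ 2) t := by
  obtain ⟨f1s, -⟩ := smooth_hasDeriv h.hf
  have hcF : ContinuousOn (Function.uncurry (fun s x => 2 * u s x *
      (ν * deriv (deriv (u s)) x - deriv f (u s x) * deriv (u s) x))) (Ici (0:ℝ) ×ˢ univ) := by
    have h1 := h.smu.cont
    have h2 := h.smu.dx.cont
    have h3 := h.smu.dx.dx.cont
    exact (h1.const_mul 2).mul ((h3.const_mul ν).sub ((f1s.continuous.comp_continuousOn h1).mul h2))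
  have hslice : ∀ s, 0 ≤ s → Continuous (u s) := fun s hs => (h.smu.slice hs).continuous
  have hder : HasDerivAt (fun s => ∫ x in (0:ℝ)..1, u s x ^ 2)
      (∫ x in (0:ℝ)..1, 2 * u t x *
        (ν * deriv (deriv (u t)) x - deriv f (u t x) * deriv (u t) x)) t := by
    obtain ⟨B, hB⟩ := ((isCompact_Icc (a := t / 2) (b := 2 * t)).prod
      (isCompact_Icc (a := (0:ℝ)) (b := 1))).exists_bound_of_continuousOn
      (hcF.mono (prod_mono (fun s hs => by
        have := hs.1; simp only [mem_Ici]; linarith) (subset_univ _)))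
    have hFt : Continuous (fun x => 2 * u t x *
        (ν * deriv (deriv (u t)) x - deriv f (u t x) * deriv (u t) x)) :=
      hcF.comp_continuous (f := fun x : ℝ => (t, x)) (by fun_prop) (fun x => by simp [ht.le])
    refine (intervalIntegral.hasDerivAt_integral_of_dominated_loc_of_deriv_le
      (F := fun s x => u s x ^ 2) (F' := fun s x => 2 * u s x *
        (ν * deriv (deriv (u s)) x - deriv f (u s x) * deriv (u s) x))
      (s := Icc (t / 2) (2 * t)) (bound := fun _ => B)
      (Icc_mem_nhds (by linarith) (by linarith)) ?_ ?_ ?_ ?_ (by simp) ?_).2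
    · filter_upwards [Ioi_mem_nhds ht] with s hs
      exact ((hslice s (le_of_lt hs)).pow 2).aestronglyMeasurable
    · exact ((hslice t ht.le).pow 2).intervalIntegrable _ _
    · exact hFt.aestronglyMeasurable
    · refine Filter.Eventually.of_forall ?_
      intro x hx s hs
      rw [uIoc_of_le zero_le_one] at hx
      exact hB (s, x) ⟨hs, hx.1.le, hx.2⟩
    · refine Filter.Eventually.of_forall ?_
      intro x hx s hs
      have hs0 : 0 < s := by linarith [hs.1]
      have := (h.smu.hasDt hs0 x).fun_pow 2
      rw [bt_u h hs0] at this
      simpa using this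
  convert hder using 1
  -- spatial integration by parts
  have hHc : Continuous (fun y => y * deriv f y) := continuous_id.mul f1s.continuous
  have hH : ∀ y, HasDerivAt (fun y => ∫ s in (0:ℝ)..y, s * deriv f s) (y * deriv f y) y := fun y =>
    intervalIntegral.integral_hasDerivAt_right (hHc.intervalIntegrable _ _)
      hHc.aestronglyMeasurable.stronglyMeasurableAtFilter hHc.continuousAt
  have hQ : ∀ x, HasDerivAt (fun x => 2 * ν * (u t x * deriv (u t) x)
      - 2 * ∫ s in (0:ℝ)..(u t x), s * deriv f s)
      (2 * ν * (deriv (u t) x * deriv (u t) x + u t x * deriv (deriv (u t)) x)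
        - 2 * (u t x * deriv f (u t x) * deriv (u t) x)) x := by
    intro x
    have hu := h.smu.hasDx ht.le x
    have hv := h.smu.dx.hasDx ht.le x
    exact ((hu.fun_mul hv).const_mul (2 * ν)).fun_sub (((hH (u t x)).comp x hu).const_mul 2)
  have c0 := hslice t ht.le
  have c1 := (h.smu.dx.slice ht.le).continuous
  have c2 := (h.smu.dx.dx.slice ht.le).continuous
  have c3 : Continuous (fun x => deriv f (u t x)) := f1s.continuous.comp c0
  have hQc : Continuous (fun x => 2 * ν * (deriv (u t) x * deriv (u t) x
        + u t x * deriv (deriv (u t)) x) - 2 * (u t x * deriv f (u t x) * deriv (u t) x)) := by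
    fun_prop
  have hint := intervalIntegral.integral_eq_sub_of_hasDerivAt (a := 0) (b := 1) (fun x _ => hQ x)
    (hQc.intervalIntegrable _ _)
  have p0 : u t 1 = u t 0 := by have := h.hper t 0; simpa using this
  have p1 : deriv (u t) 1 = deriv (u t) 0 := by
    have := per_deriv (h.hper t) 0; simpa using this
  rw [p0, p1, sub_self] at hint
  have e : ∀ x, 2 * u t x * (ν * deriv (deriv (u t)) x - deriv f (u t x) * deriv (u t) x)
      = (2 * ν * (deriv (u t) x * deriv (u t) x
        + u t x * deriv (deriv (u t)) x) - 2 * (u t x * deriv f (u t x) * deriv (u t) x))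
        + (-(2 * ν)) * deriv (u t) x ^ 2 := by intro x; ring
  simp_rw [e]
  rw [intervalIntegral.integral_add (hQc.intervalIntegrable _ _)
    (Continuous.intervalIntegrable (by fun_prop) _ _), hint, intervalIntegral.integral_const_mul,
    zero_add]

lemma energy_identity {f : ℝ → ℝ} {σ ν : ℝ} {u : ℝ → ℝ → ℝ} (h : IsBurgersSolution f σ ν u)
    {a b : ℝ} (ha : 0 ≤ a) (hab : a ≤ b) :
    (∫ x in (0:ℝ)..1, u b x ^ 2) - (∫ x in (0:ℝ)..1, u a x ^ 2)
      = - 2 * ∫ t in a..b, ν * ∫ x in (0:ℝ)..1, deriv (u (max t 0)) x ^ 2 := by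
  have hE : Continuous (fun t => ∫ x in (0:ℝ)..1, u (max t 0) x ^ 2) :=
    param_cont (w := fun t x => u t x ^ 2) (h.smu.cont.pow 2)
  have hG : Continuous (fun t => ∫ x in (0:ℝ)..1, deriv (u (max t 0)) x ^ 2) :=
    param_cont (w := fun t x => deriv (u t) x ^ 2) (h.smu.dx.cont.pow 2)
  have := intervalIntegral.integral_eq_sub_of_hasDerivAt_of_le hab hE.continuousOn
    (f' := fun t => -(2 * ν) * ∫ x in (0:ℝ)..1, deriv (u (max t 0)) x ^ 2) ?_
    ((hG.const_mul _).intervalIntegrable _ _)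
  · rw [max_eq_left ha, max_eq_left (ha.trans hab)] at this
    rw [← this, intervalIntegral.integral_const_mul, intervalIntegral.integral_const_mul]
    ring
  · intro t ht
    have ht0 : 0 < t := lt_of_le_of_lt ha ht.1
    have h1 := energy_deriv h ht0
    rw [max_eq_left ht0.le]
    refine h1.congr_of_eventuallyEq ?_
    filter_upwards [Ioi_mem_nhds ht0] with s hs
    rw [max_eq_left (le_of_lt hs)]

/-- facts at the initial time -/
lemma initial_facts {f : ℝ → ℝ} {σ ν D : ℝ} {u : ℝ → ℝ → ℝ} (h : IsBurgersSolution f σ ν u)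
    (hD : burgersD u = D) : 0 < D ∧ (∀ x, |deriv (u 0) x| ≤ D) ∧
      (D ^ 2)⁻¹ ≤ ∫ x in (0:ℝ)..1, u 0 x ^ 2 := by
  have c0 := (h.smu.slice le_rfl).continuous
  have c1 := (h.smu.dx.slice le_rfl).continuous
  have e1 : sobLp 0 1 (u 0) = ∫ x in (0:ℝ)..1, |u 0 x| := by
    rw [sobLp, iteratedDeriv_zero, l1_eq c0]
  have hm : 0 < ∫ x in (0:ℝ)..1, |u 0 x| := by
    obtain ⟨x, hx⟩ := h.hinit
    have hp : Function.Periodic (u 0) 1 := h.hper 0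
    obtain ⟨y, hy, hyx⟩ := hp.exists_mem_Ico₀ one_pos x
    rw [hyx] at hx
    exact intervalIntegral.integral_pos zero_lt_one (by fun_prop) (fun _ _ => abs_nonneg _)
      ⟨y, ⟨hy.1, hy.2.le⟩, abs_pos.2 hx⟩
  set m := ∫ x in (0:ℝ)..1, |u 0 x| with hmdef
  have hD1 : m⁻¹ ≤ D := by rw [← hD, burgersD, e1]; exact le_max_left _ _
  have hD2 : sobLp 1 ⊤ (u 0) ≤ D := by rw [← hD, burgersD]; exact le_max_right _ _
  have hDpos : 0 < D := lt_of_lt_of_le (inv_pos.2 hm) hD1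
  refine ⟨hDpos, ?_, ?_⟩
  · intro x
    refine le_trans ?_ hD2
    rw [sobLp, iteratedDeriv_one]
    exact linfty_ge c1 (per_deriv (h.hper 0)) x
  · have h1 : 0 ≤ ∫ x in (0:ℝ)..1, (|u 0 x| - m) ^ 2 :=
      intervalIntegral.integral_nonneg zero_le_one (fun _ _ => sq_nonneg _)
    have e : ∀ x, (|u 0 x| - m) ^ 2 = u 0 x ^ 2 - 2 * m * |u 0 x| + m ^ 2 := by
      intro x; rw [sub_sq, sq_abs]; ring
    simp_rw [e] at h1
    rw [intervalIntegral.integral_add (Continuous.intervalIntegrable (by fun_prop) _ _) (by simp),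
      intervalIntegral.integral_sub (Continuous.intervalIntegrable (by fun_prop) _ _)
        (Continuous.intervalIntegrable (by fun_prop) _ _),
      intervalIntegral.integral_const_mul, ← hmdef] at h1
    simp at h1
    have h2 : D⁻¹ ≤ m := inv_le_of_inv_le₀ hm hD1
    have h3 : (D⁻¹) ^ 2 ≤ m ^ 2 := pow_le_pow_left₀ (by positivity) h2 2
    rw [inv_pow] at h3
    nlinarith

/-- There exist `C > 0`, `K₁ > 1` and `ν₀ ∈ (0,1]` depending only
on `f` and `D`, such that for every `K ≥ K₁` and every `ν ∈ (0,ν₀]`, the set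
`L_K` of times `t ∈ [T₁,T₂]` where (i) `K⁻¹ ≤ |u(t)|_∞` and `max u_x(t) ≤ K`,
(ii) `K⁻¹ν⁻¹ ≤ |u_x(t)|_∞ ≤ Kν⁻¹`, (iii) `|u_{xx}(t)|_∞ ≤ Kν⁻²`, has Lebesgue
measure at least `C`. -/
theorem statement15 (f : ℝ → ℝ) (σ D Ct : ℝ) (hCt : 0 < Ct)
    (hCtb : ∀ ν, 0 < ν → ν ≤ 1 →
      ∀ u : ℝ → ℝ → ℝ, IsBurgersSolution f σ ν u → burgersD u = D →
        ∀ t, 0 ≤ t → sobLp 1 2 (u t) ^ 2 ≤ Ct * ν⁻¹) :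
    ∃ C > 0, ∃ K₁ > (1 : ℝ), ∃ ν₀, 0 < ν₀ ∧ ν₀ ≤ 1 ∧
      ∀ K, K₁ ≤ K → ∀ ν, 0 < ν → ν ≤ ν₀ →
        ∀ u : ℝ → ℝ → ℝ, IsBurgersSolution f σ ν u → burgersD u = D →
          ENNReal.ofReal C ≤ volume
            {t : ℝ | t ∈ Icc (burgersT₁ D Ct) (burgersT₂ σ D Ct) ∧
              (K⁻¹ ≤ sobLp 0 ⊤ (u t) ∧ ∀ x, deriv (u t) x ≤ K) ∧
              (K⁻¹ * ν⁻¹ ≤ sobLp 1 ⊤ (u t) ∧ sobLp 1 ⊤ (u t) ≤ K * ν⁻¹) ∧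
              sobLp 2 ⊤ (u t) ≤ K * (ν ^ 2)⁻¹} := by
  by_cases hgood : 0 < D ∧ 0 < σ ∧ ContDiff ℝ (⊤ : ℕ∞) f
  swap
  · refine ⟨1, one_pos, 2, by norm_num, 1, one_pos, le_rfl, ?_⟩
    intro K _ ν _ _ u h hD
    exact absurd ⟨(initial_facts h hD).1, h.hσ, h.hf⟩ hgood
  obtain ⟨hD0, hσ, hfs⟩ := hgood
  obtain ⟨f1s, -⟩ := smooth_hasDeriv hfs
  obtain ⟨f2s, -⟩ := smooth_hasDeriv f1s
  obtain ⟨f3s, -⟩ := smooth_hasDeriv f2s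
  obtain ⟨B2, hB2'⟩ := (isCompact_Icc (a := -D) (b := D)).exists_bound_of_continuousOn
    f2s.continuous.continuousOn
  obtain ⟨B3, hB3'⟩ := (isCompact_Icc (a := -D) (b := D)).exists_bound_of_continuousOn
    f3s.continuous.continuousOn
  have hB2 : ∀ y, |y| ≤ D → |deriv (deriv f) y| ≤ B2 := fun y hy => hB2' y (abs_le.1 hy)
  have hB3 : ∀ y, |y| ≤ D → |deriv (deriv (deriv f)) y| ≤ B3 := fun y hy => hB3' y (abs_le.1 hy)
  have hB20 : 0 ≤ B2 := (abs_nonneg _).trans (hB2 0 (by simpa using hD0.le))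
  obtain ⟨T₁, hT₁⟩ : ∃ T, T = burgersT₁ D Ct := ⟨_, rfl⟩
  obtain ⟨T₂, hT₂⟩ : ∃ T, T = burgersT₂ σ D Ct := ⟨_, rfl⟩
  rw [← hT₁, ← hT₂]
  have hT₁e : 2 * Ct * T₁ = (D ^ 2)⁻¹ / 2 := by
    rw [hT₁, burgersT₁]; field_simp; norm_num
  have hT₁0 : 0 < T₁ := by rw [hT₁, burgersT₁]; positivity
  have hT₂1 : 3 / 2 * T₁ ≤ T₂ := by rw [hT₁, hT₂]; exact le_max_left _ _
  have hT₂2 : 2 * D * σ⁻¹ ≤ T₂ := by rw [hT₂]; exact le_max_right _ _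
  have hT12 : T₁ < T₂ := by linarith
  obtain ⟨δ, hδ⟩ : ∃ δ, δ = (D ^ 2)⁻¹ := ⟨_, rfl⟩
  have hδ0 : 0 < δ := by rw [hδ]; positivity
  obtain ⟨c0, hc0⟩ : ∃ c, c = δ / (32 * (T₂ - T₁)) := ⟨_, rfl⟩
  have hc00 : 0 < c0 := by
    have : 0 < T₂ - T₁ := by linarith
    rw [hc0]; positivity
  obtain ⟨V, hV⟩ : ∃ V, V = D + B2 * D ^ 2 / 2 := ⟨_, rfl⟩
  have hV0 : 0 < V := by rw [hV]; positivity
  obtain ⟨R, hR⟩ : ∃ R, R = (1 + 3 * B2 * V) * V ^ 2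
      + (B3 ^ 2 * V ^ 6 + 2 * (1 + 3 * B2 * V) * B2 * V ^ 3) := ⟨_, rfl⟩
  have hR0 : 0 ≤ R := by rw [hR]; positivity
  refine ⟨δ / 16 / (2 * Ct), by positivity, 2 + 2 * D + V + 2 * D / c0 + √R, ?_,
    min 1 T₁, by positivity, min_le_left _ _, ?_⟩
  · have : 0 < 2 * D / c0 := by positivity
    have := Real.sqrt_nonneg R
    linarith
  intro K hK ν hν hνle u h hDu
  obtain ⟨-, hu0, hE0⟩ := initial_facts h hDu
  rw [← hδ] at hE0
  have hν1 : ν ≤ 1 := hνle.trans (min_le_left _ _)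
  have hνT : ν ≤ T₁ := hνle.trans (min_le_right _ _)
  have k1 : 0 < 2 * D / c0 := by positivity
  have k2 := Real.sqrt_nonneg R
  have hK0 : 0 < K := by linarith
  -- pointwise bounds
  have hux : ∀ t, 0 ≤ t → ∀ x, deriv (u t) x ≤ D := fun t ht x =>
    ux_le h (fun x => le_of_abs_le (hu0 x)) ht x
  have hub : ∀ t, 0 ≤ t → ∀ x, |u t x| ≤ D := fun t ht x =>
    zero_mean_bound ((h.smu.slice ht).differentiable (by simp)) (h.hper t) (h.hmean t ht) hD0.le
      (hux t ht) x
  have huV : ∀ t, 0 ≤ t → ∀ x, |deriv (u t) x| ≤ V / ν := by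
    intro t ht x
    have hDν : D ≤ D / ν := by rw [le_div_iff₀ hν]; nlinarith
    have hVe : V / ν = D / ν + B2 / (2 * ν) * D ^ 2 := by rw [hV]; field_simp
    have hpos : 0 ≤ B2 / (2 * ν) * D ^ 2 := by positivity
    have h1 := ux_lower h (M := B2 / (2 * ν)) hu0 hub hB2 (by positivity)
      (le_of_eq (by field_simp)) ht x
    have h2 := hux t ht x
    rw [abs_le]; constructor <;> linarith
  have huxx : ∀ t, ν ≤ t → ∀ x, |deriv (deriv (u t)) x| ≤ √R / ν ^ 2 := by
    intro t ht x
    have h1 := uxx_le h hub hB2 hB3 huV ht x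
    rw [← hR] at h1
    refine abs_le_of_sq_le_sq ?_ (by positivity)
    rw [div_pow, Real.sq_sqrt hR0]
    calc _ ≤ _ := h1
      _ = _ := by ring
  -- energy
  obtain ⟨E, hE⟩ : ∃ E : ℝ → ℝ, E = fun t => ∫ x in (0:ℝ)..1, u (max t 0) x ^ 2 := ⟨_, rfl⟩
  obtain ⟨G, hG⟩ : ∃ G : ℝ → ℝ, G = fun t => ν * ∫ x in (0:ℝ)..1, deriv (u (max t 0)) x ^ 2 :=
    ⟨_, rfl⟩
  have hEt : ∀ t, 0 ≤ t → E t = ∫ x in (0:ℝ)..1, u t x ^ 2 := by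
    intro t ht; simp only [hE, max_eq_left ht]
  have hGt : ∀ t, 0 ≤ t → G t = ν * ∫ x in (0:ℝ)..1, deriv (u t) x ^ 2 := by
    intro t ht; simp only [hG, max_eq_left ht]
  have hEc : Continuous E := by
    rw [hE]; exact param_cont (w := fun t x => u t x ^ 2) (h.smu.cont.pow 2)
  have hGc : Continuous G := by
    rw [hG]
    have hG1 : Continuous (fun t => ∫ x in (0:ℝ)..1, deriv (u (max t 0)) x ^ 2) :=
      param_cont (w := fun t x => deriv (u t) x ^ 2) (h.smu.dx.cont.pow 2)
    exact hG1.const_mul ν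
  have hid : ∀ a b, 0 ≤ a → a ≤ b → E b - E a = -2 * ∫ t in a..b, G t := by
    intro a b ha hab
    rw [hEt a ha, hEt b (ha.trans hab), hG]
    exact energy_identity h ha hab
  have hGle : ∀ t, 0 ≤ t → G t ≤ Ct := by
    intro t ht
    have h1 := hCtb ν hν hν1 u h hDu t ht
    rw [sobLp, iteratedDeriv_one, l2_sq (h.smu.dx.slice ht).continuous] at h1
    rw [hGt t ht]
    calc _ ≤ ν * (Ct * ν⁻¹) := mul_le_mul_of_nonneg_left h1 hν.le
      _ = Ct := by field_simp
  have hG0 : ∀ t, 0 ≤ G t := by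
    intro t
    rw [hG]
    exact mul_nonneg hν.le (intervalIntegral.integral_nonneg zero_le_one (fun _ _ => sq_nonneg _))
  have hmono : ∀ a b, 0 ≤ a → a ≤ b → E b ≤ E a := by
    intro a b ha hab
    have h1 := hid a b ha hab
    have h2 : 0 ≤ ∫ t in a..b, G t := intervalIntegral.integral_nonneg hab (fun t _ => hG0 t)
    linarith
  have hE1 : δ / 2 ≤ E T₁ := by
    have h1 := hid 0 T₁ le_rfl hT₁0.le
    have h2 : ∫ t in (0:ℝ)..T₁, G t ≤ ∫ t in (0:ℝ)..T₁, Ct :=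
      intervalIntegral.integral_mono_on hT₁0.le (hGc.intervalIntegrable _ _) (by simp)
        (fun t ht => hGle t ht.1)
    simp at h2
    rw [hEt 0 le_rfl] at h1
    rw [← hδ] at hT₁e
    linarith
  have hE2 : E T₂ ≤ δ / 4 := by
    have hT₂0 : 0 < T₂ := by linarith
    have h1 : ∀ x, deriv (u T₂) x ≤ 1 / (2 * D) := by
      intro x
      have h2 := ux_decay h hT₂0.le x
      rw [le_div_iff₀ (by positivity)]
      by_contra hcon
      push Not at hcon
      have hd : 0 < deriv (u T₂) x := by
        by_contra hneg
        push Not at hneg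
        nlinarith
      have h3 := mul_le_mul_of_nonneg_right hT₂2 hd.le
      have h4 : σ⁻¹ * (deriv (u T₂) x * (2 * D)) ≤ σ⁻¹ * 1 := by nlinarith
      have h5 := le_of_mul_le_mul_left h4 (by positivity)
      linarith
    have h2 : ∀ x, |u T₂ x| ≤ 1 / (2 * D) := fun x =>
      zero_mean_bound ((h.smu.slice hT₂0.le).differentiable (by simp)) (h.hper T₂)
        (h.hmean T₂ hT₂0.le) (by positivity) h1 x
    have c := (h.smu.slice hT₂0.le).continuous
    rw [hEt T₂ hT₂0.le]
    have h3 : ∫ x in (0:ℝ)..1, u T₂ x ^ 2 ≤ ∫ x in (0:ℝ)..1, (1 / (2 * D)) ^ 2 :=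
      intervalIntegral.integral_mono_on zero_le_one (Continuous.intervalIntegrable (by fun_prop) _ _)
        (by simp) (fun x _ => by
          rw [← sq_abs]; exact pow_le_pow_left₀ (abs_nonneg _) (h2 x) 2)
    rw [intervalIntegral.integral_const] at h3
    have h4 : (1 / (2 * D)) ^ 2 = δ / 4 := by rw [hδ]; field_simp; norm_num
    rw [h4] at h3
    simpa using h3
  obtain ⟨Ts, hTs, hETs⟩ : ∃ T ∈ Icc T₁ T₂, E T = 3 / 8 * δ :=
    intermediate_value_Icc' hT12.le hEc.continuousOn ⟨by linarith, by linarith⟩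
  have hcheb := chebyshev_time hGc (a := T₁) (b := Ts) (c := c0) (A := δ / 16) (B := Ct) hTs.1 hc00.le
    hCt (fun t ht => hGle t (hT₁0.le.trans ht.1))
    (by have := hid T₁ Ts hT₁0.le hTs.1; linarith)
    (by
      have h1 : c0 * (Ts - T₁) ≤ c0 * (T₂ - T₁) :=
        mul_le_mul_of_nonneg_left (by linarith [hTs.2]) hc00.le
      have h2 : c0 * (T₂ - T₁) = δ / 16 / 2 := by
        have : T₂ - T₁ ≠ 0 := by linarith
        rw [hc0]; field_simp; norm_num
      linarith)
  refine hcheb.trans (measure_mono ?_)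
  rintro t ⟨ht, hct⟩
  have ht0 : 0 ≤ t := hT₁0.le.trans ht.1
  have cu := (h.smu.slice ht0).continuous
  have cv := (h.smu.dx.slice ht0).continuous
  have hS0 : ∀ x, |u t x| ≤ sobLp 0 ⊤ (u t) := by
    intro x; rw [sobLp, iteratedDeriv_zero]; exact linfty_ge cu (h.hper t) x
  have hS1 : ∀ x, |deriv (u t) x| ≤ sobLp 1 ⊤ (u t) := by
    intro x; rw [sobLp, iteratedDeriv_one]; exact linfty_ge cv (per_deriv (h.hper t)) x
  refine ⟨⟨ht.1, ht.2.trans hTs.2⟩, ⟨?_, ?_⟩, ⟨?_, ?_⟩, ?_⟩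
  · have h1 : 3 / 8 * δ ≤ E t := by rw [← hETs]; exact hmono t Ts ht0 ht.2
    rw [hEt t ht0] at h1
    have h2 : ∫ x in (0:ℝ)..1, u t x ^ 2 ≤ ∫ x in (0:ℝ)..1, (sobLp 0 ⊤ (u t)) ^ 2 :=
      intervalIntegral.integral_mono_on zero_le_one (Continuous.intervalIntegrable (by fun_prop) _ _)
        (by simp) (fun x _ => by
          rw [← sq_abs]; exact pow_le_pow_left₀ (abs_nonneg _) (hS0 x) 2)
    simp only [intervalIntegral.integral_const, sub_zero, one_smul] at h2
    have h3 : K⁻¹ ≤ 1 / (2 * D) := by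
      rw [← one_div]; exact one_div_le_one_div_of_le (by positivity) (by linarith)
    have h4 : (1 / (2 * D)) ^ 2 = δ / 4 := by rw [hδ]; field_simp; norm_num
    refine h3.trans (abs_le_of_sq_le_sq' ?_ ((abs_nonneg _).trans (hS0 0))).2
    linarith
  · intro x
    have := hux t ht0 x
    linarith
  · have hSn : 0 ≤ sobLp 1 ⊤ (u t) := (abs_nonneg _).trans (hS1 0)
    rw [hGt t ht0] at hct
    have h1 : ∫ x in (0:ℝ)..1, deriv (u t) x ^ 2
        ≤ ∫ x in (0:ℝ)..1, sobLp 1 ⊤ (u t) * (2 * D - deriv (u t) x) := by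
      refine intervalIntegral.integral_mono_on zero_le_one
        (Continuous.intervalIntegrable (by fun_prop) _ _)
        (Continuous.intervalIntegrable (by fun_prop) _ _) (fun x _ => ?_)
      have a1 : |deriv (u t) x| ≤ 2 * D - deriv (u t) x := by
        have := hux t ht0 x
        rw [abs_le]; constructor <;> linarith
      calc deriv (u t) x ^ 2 = |deriv (u t) x| * |deriv (u t) x| := by rw [← sq_abs, sq]
        _ ≤ _ := mul_le_mul (hS1 x) a1 (abs_nonneg _) hSn
    have h2 : ∫ x in (0:ℝ)..1, deriv (u t) x = 0 := by
      rw [intervalIntegral.integral_eq_sub_of_hasDerivAt (fun x _ => h.smu.hasDx ht0 x)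
        (cv.intervalIntegrable _ _)]
      have := h.hper t 0
      rw [zero_add] at this
      rw [this, sub_self]
    rw [intervalIntegral.integral_const_mul, intervalIntegral.integral_sub (by simp)
      (cv.intervalIntegrable _ _), h2] at h1
    simp only [intervalIntegral.integral_const, sub_zero, one_smul] at h1
    have h3 : c0 ≤ ν * (sobLp 1 ⊤ (u t) * (2 * D)) :=
      hct.trans (mul_le_mul_of_nonneg_left h1 hν.le)
    have h4 : 2 * D ≤ K * c0 := by rw [← div_le_iff₀ hc00]; linarith
    rw [← mul_inv, inv_le_iff_one_le_mul₀ (by positivity)]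
    have h5 : 2 * D ≤ K * (ν * (sobLp 1 ⊤ (u t) * (2 * D))) :=
      h4.trans (mul_le_mul_of_nonneg_left h3 hK0.le)
    have h6 : 2 * D * 1 ≤ 2 * D * (sobLp 1 ⊤ (u t) * (K * ν)) := by linarith
    exact le_of_mul_le_mul_left h6 (by positivity)
  · rw [sobLp, iteratedDeriv_one]
    refine linfty_le (by positivity) (fun x => (huV t ht0 x).trans ?_)
    rw [div_eq_mul_inv]
    exact mul_le_mul_of_nonneg_right (by linarith) (by positivity)
  · rw [sobLp, iteratedDeriv_succ, iteratedDeriv_one]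
    refine linfty_le (by positivity) (fun x => (huxx t (hνT.trans ht.1) x).trans ?_)
    rw [div_eq_mul_inv]
    exact mul_le_mul_of_nonneg_right (by linarith) (by positivity)
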